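/- Let m ≥ 2 be an integer. For τ ∈ ℍ and u, v, w ∈ ℂ with u−v ∉ Λ_τ, u−w ∉ Λ_τ and v−w ∉ Λ_τ, define φ(u,v,w;τ) = 2πi·∂_τ℘_m(u−v;τ) + m·G₂(τ)·℘_m(u−v;τ) − m·G₂(τ)·(u−v)·℘_{m+1}(u−v;τ) + m·℘_{m+1}(u−v;τ)·( ℘₁(u−w;τ) − ℘₁(v−w;τ) ), where ∂_τ℘_m(z;τ) denotes the complex derivative of the function τ ↦ ℘_m(z;τ) at fixed z. Then for every g = (A B; C D) ∈ SL₂(ℤ): φ( u/(Cτ+D), v/(Cτ+D), w/(Cτ+D); (Aτ+B)/(Cτ+D) ) = (Cτ+D)^{m+2}·φ(u,v,w;τ). (This is the modular transformation of weight m+2 of the function ϑ_j(℘_m(z_r−z_s;·)) in the case j ∉ {r,s}.) -/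

import Mathlib

open Complex Real

/-- The lattice point `kτ + l` associated to `p = (k, l) ∈ ℤ²`. -/
noncomputable def latticePt (τ : ℂ) (p : ℤ × ℤ) : ℂ := (p.1 : ℂ) * τ + (p.2 : ℂ)

/-- The Weierstrass function `℘₁(z;τ)`. -/
noncomputable def wp1 (z τ : ℂ) : ℂ :=
  1 / z + ∑' p : {p : ℤ × ℤ // p ≠ (0, 0)},
    (1 / (z - latticePt τ p.1) + 1 / latticePt τ p.1 + z / (latticePt τ p.1) ^ 2)

/-- The Weierstrass function `℘₂(z;τ)`. -/
noncomputable def wp2 (z τ : ℂ) : ℂ :=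
  1 / z ^ 2 + ∑' p : {p : ℤ × ℤ // p ≠ (0, 0)},
    (1 / (z - latticePt τ p.1) ^ 2 - 1 / (latticePt τ p.1) ^ 2)

/-- The Weierstrass function `℘_m(z;τ)` for `m ≥ 3`. -/
noncomputable def wpHigh (m : ℕ) (z τ : ℂ) : ℂ :=
  ∑' p : ℤ × ℤ, 1 / (z - latticePt τ p) ^ m

/-- The Weierstrass function `℘_m(z;τ)`, `m ≥ 1`. -/
noncomputable def wp (m : ℕ) (z τ : ℂ) : ℂ :=
  if m = 1 then wp1 z τ else if m = 2 then wp2 z τ else wpHigh m z τ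

/-- The Eisenstein series `G_k(τ) = Σ_{(m,l) ≠ (0,0)} (mτ+l)^{-k}` (used for `k ≥ 3`). -/
noncomputable def Eis (k : ℕ) (τ : ℂ) : ℂ :=
  ∑' p : {p : ℤ × ℤ // p ≠ (0, 0)}, 1 / (latticePt τ p.1) ^ k

/-- The quasimodular Eisenstein series
`G₂(τ) = π²/3 + Σ_{m≠0} Σ_{l∈ℤ} (mτ+l)^{-2}` (iterated sum). -/
noncomputable def G2 (τ : ℂ) : ℂ :=
  (Real.pi : ℂ) ^ 2 / 3 +
    ∑' m : {m : ℤ // m ≠ 0}, ∑' l : ℤ, 1 / (((m : ℤ) : ℂ) * τ + (l : ℂ)) ^ 2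

/-- The function `φ(u,v,w;τ) = 2πi·∂_τ℘_m(u−v;τ) + m·G₂(τ)·℘_m(u−v;τ)
− m·G₂(τ)·(u−v)·℘_{m+1}(u−v;τ) + m·℘_{m+1}(u−v;τ)·(℘₁(u−w;τ) − ℘₁(v−w;τ))`. -/
noncomputable def phiTheta (m : ℕ) (u v w τ : ℂ) : ℂ :=
  2 * Real.pi * Complex.I * deriv (fun s => wp m (u - v) s) τ +
    (m : ℂ) * G2 τ * wp m (u - v) τ -
    (m : ℂ) * G2 τ * (u - v) * wp (m + 1) (u - v) τ +
    (m : ℂ) * wp (m + 1) (u - v) τ * (wp1 (u - w) τ - wp1 (v - w) τ)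

/-!
Each `℘_m(z;τ)` is a sum over the lattice points `l` of a function of `(z, l)` that is homogeneous
of degree `-m`, so multiplication by `(Cτ + D)⁻¹`, which maps `Λ_τ` onto `Λ_{gτ}`, gives it weight
`m`. By Euler's identity, the `τ`-derivative of the summand at `l = kτ + n` is `k / l` times the
summand of `m(z℘_{m+1} - ℘_m)`. The isomorphism `Λ_τ ≃ Λ_{gτ}` sends `k` to `(Cτ + D)k - Cl`, and
the second term produces the anomaly `-mC(Cτ + D)^{m+1}(z℘_{m+1} - ℘_m)` of `∂_τ℘_m`. It cancels
against the anomaly `-2πiC(Cτ + D)` of `G₂`.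
-/

open Filter Topology

lemma add_tsum_ne_eq_tsum {ι α : Type*} [AddCommGroup α] [TopologicalSpace α]
    [IsTopologicalAddGroup α] [T2Space α] {f : ι → α} (hf : Summable f) (i : ι) :
    f i + ∑' j : {j // j ≠ i}, f j = ∑' j, f j := by
  rw [← hf.sum_add_tsum_compl (s := {i}), Finset.sum_singleton, Finset.coe_singleton]
  rfl

section Summand

/-- The summand of `℘_m(z;τ)`, `m ≥ 1`, as a function of the lattice point `l`. Since `1 / 0 = 0`,
its value at `l = 0` is `1 / z ^ m`, the term that the definitions of `wp1` and `wp2` list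
separately. -/
noncomputable def wpSummand : ℕ → ℂ → ℂ → ℂ
  | 1, z, l => 1 / (z - l) + 1 / l + z / l ^ 2
  | 2, z, l => 1 / (z - l) ^ 2 - 1 / l ^ 2
  | m, z, l => 1 / (z - l) ^ m

@[simp]
lemma wpSummand_zero_right (m : ℕ) (z : ℂ) : wpSummand m z 0 = 1 / z ^ m := by
  rcases m with _ | _ | _ | m <;> simp [wpSummand]

lemma wpSummand_div_div (m : ℕ) (z l : ℂ) {j : ℂ} (hj : j ≠ 0) :
    wpSummand m (z / j) (l / j) = j ^ m * wpSummand m z l := by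
  rcases m with _ | _ | _ | m <;> simp only [wpSummand, ← sub_div, div_pow] <;> field_simp <;> ring

lemma hasDerivAt_one_div_pow {𝕜 : Type*} [NontriviallyNormedField 𝕜] (n : ℕ) {x : 𝕜} (hx : x ≠ 0) :
    HasDerivAt (fun x ↦ 1 / x ^ n) (-n / x ^ (n + 1)) x := by
  simp only [one_div]
  refine ((hasDerivAt_pow n x).fun_inv (pow_ne_zero n hx)).congr_deriv ?_
  rcases n with _ | n
  · simp
  · rw [Nat.add_sub_cancel]
    field_simp
    ring

/-- This is Euler's identity: `wpSummand m` is homogeneous of degree `-m` in `(z, l)` and its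
`z`-derivative is `-m * wpSummand (m + 1)`. -/
lemma hasDerivAt_wpSummand (m : ℕ) {z l : ℂ} (hzl : z ≠ l) (hl : l ≠ 0) :
    HasDerivAt (wpSummand m z) (m * (z * wpSummand (m + 1) z l - wpSummand m z l) / l) l := by
  have hsub : z - l ≠ 0 := sub_ne_zero.mpr hzl
  have hpole (n : ℕ) : HasDerivAt (fun l ↦ 1 / (z - l) ^ n) (n / (z - l) ^ (n + 1)) l :=
    ((hasDerivAt_one_div_pow n hsub).comp l ((hasDerivAt_id' l).const_sub z)).congr_deriv (by ring)
  have hcorr (n : ℕ) := hasDerivAt_one_div_pow n hl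
  rcases m with _ | _ | _ | m
  · exact (hpole 0).congr_deriv (by simp)
  · have h := ((hpole 1).add (hcorr 1)).add ((hcorr 2).const_mul z)
    refine (h.congr_deriv ?_).congr_of_eventuallyEq (.of_forall fun l ↦ ?_)
    · simp only [wpSummand]
      field_simp
      push_cast
      ring
    · simp [wpSummand, div_eq_mul_inv]
  · refine ((hpole 2).sub (hcorr 2)).congr_deriv ?_
    simp only [wpSummand]
    field_simp
    push_cast
    ring
  · refine (hpole (m + 3)).congr_deriv ?_
    simp only [wpSummand]
    field_simp
    ring

lemma norm_inv_mul_mul_le {K : Type*} [NormedDivisionRing K] {R : ℝ} (hR : 0 < R) {x y w : K}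
    (hx : R ≤ ‖x‖) (hy : R ≤ ‖y‖) (hw : R ≤ ‖w‖) : ‖(x * y * w)⁻¹‖ ≤ 1 / R ^ 3 := by
  rw [norm_inv, norm_mul, norm_mul, ← one_div, pow_three']
  gcongr

lemma exists_norm_wpSummand_le {m : ℕ} (hm : 1 ≤ m) (z : ℂ) {c : ℝ} (hc : 0 < c) :
    ∃ C, ∀ R ≥ c, ∀ l, R ≤ ‖z - l‖ → R ≤ ‖l‖ → ‖wpSummand m z l‖ ≤ C / R ^ 3 := by
  have hne {R : ℝ} {x : ℂ} (hR : R ≥ c) (hx : R ≤ ‖x‖) : x ≠ 0 :=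
    norm_pos_iff.mp ((hc.trans_le hR).trans_le hx)
  rcases m with _ | _ | _ | m
  · contradiction
  · refine ⟨‖z ^ 2‖, fun R hR l hzl hl ↦ ?_⟩
    have hfactor : wpSummand 1 z l = z ^ 2 * (l * l * (z - l))⁻¹ := by
      simp only [wpSummand]
      field_simp [hne hR hzl, hne hR hl]
      ring
    rw [hfactor, norm_mul, div_eq_mul_one_div]
    gcongr
    exact norm_inv_mul_mul_le (hc.trans_le hR) hl hl hzl
  · refine ⟨2 * ‖z‖, fun R hR l hzl hl ↦ ?_⟩
    have hfactor : wpSummand 2 z l =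
        z * ((l * (z - l) * (z - l))⁻¹ - (l * l * (z - l))⁻¹) := by
      simp only [wpSummand]
      field_simp [hne hR hzl, hne hR hl]
      ring
    have h₁ := norm_inv_mul_mul_le (hc.trans_le hR) hl hzl hzl
    have h₂ := norm_inv_mul_mul_le (hc.trans_le hR) hl hl hzl
    calc ‖wpSummand 2 z l‖ ≤ ‖z‖ * (1 / R ^ 3 + 1 / R ^ 3) := by
          rw [hfactor, norm_mul]
          gcongr
          exact (norm_sub_le _ _).trans (add_le_add h₁ h₂)
      _ = 2 * ‖z‖ / R ^ 3 := by ring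
  · refine ⟨1 / c ^ m, fun R hR l hzl _ ↦ ?_⟩
    have hR0 := hc.trans_le hR
    have hpole : wpSummand (m + 3) z l = 1 / (z - l) ^ (m + 3) := rfl
    rw [hpole, norm_div, norm_one, norm_pow, div_div]
    calc 1 / ‖z - l‖ ^ (m + 3) ≤ 1 / R ^ (m + 3) := by gcongr
      _ ≤ 1 / (c ^ m * R ^ 3) := by rw [pow_add]; gcongr

end Summand

section Lattice

lemma norm_vec_fst_snd (p : ℤ × ℤ) : ‖![p.1, p.2]‖ = ‖p‖ := by
  rw [EisensteinSeries.norm_eq_max_natAbs, Prod.norm_def]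
  simp [Int.norm_eq_abs, Nat.cast_natAbs]

lemma summable_one_add_norm_pow_three_inv :
    Summable fun p : ℤ × ℤ ↦ ((1 + ‖p‖) ^ 3)⁻¹ := by
  have h : Summable fun p : ℤ × ℤ ↦ (‖p‖ ^ 3)⁻¹ := by
    refine ((finTwoArrowEquiv ℤ).symm.summable_iff.mpr
      (EisensteinSeries.summable_one_div_norm_rpow (k := 3) (by norm_num))).congr fun p ↦ ?_
    rw [Function.comp_apply, finTwoArrowEquiv_symm_apply, norm_vec_fst_snd,
      Real.rpow_neg (norm_nonneg _)]
    norm_cast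
  refine h.of_norm_bounded_eventually ?_
  filter_upwards [eventually_cofinite_ne 0] with p hp
  have : 0 < ‖p‖ := norm_pos_iff.mpr hp
  rw [Real.norm_of_nonneg (by positivity)]
  gcongr
  linarith

open UpperHalfPlane

lemma hasDerivAt_latticePt (s : ℂ) (p : ℤ × ℤ) :
    HasDerivAt (fun s ↦ latticePt s p) p.1 s := by
  simpa [latticePt] using ((hasDerivAt_id s).const_mul (p.1 : ℂ)).add_const (p.2 : ℂ)

lemma norm_latticePt_sub_latticePt_le (s τ : ℂ) (p : ℤ × ℤ) :
    ‖latticePt s p - latticePt τ p‖ ≤ ‖s - τ‖ * (1 + ‖p‖) := by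
  have h : latticePt s p - latticePt τ p = (s - τ) * p.1 := by simp only [latticePt]; ring
  rw [h, norm_mul, Complex.norm_intCast, ← Int.norm_eq_abs]
  gcongr
  linarith [norm_fst_le p]

variable (τ : ℍ)

lemma r_mul_norm_le_norm_latticePt (p : ℤ × ℤ) :
    EisensteinSeries.r τ * ‖p‖ ≤ ‖latticePt τ p‖ := by
  rcases eq_or_ne p 0 with rfl | hp
  · simp
  · have hx : ![p.1, p.2] ≠ 0 := by
      rwa [← norm_ne_zero_iff, norm_vec_fst_snd, norm_ne_zero_iff]
    simpa [norm_vec_fst_snd, latticePt] using EisensteinSeries.r_mul_max_le τ hx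

lemma latticePt_ne_zero {p : ℤ × ℤ} (hp : p ≠ 0) : latticePt τ p ≠ 0 := by
  rw [← norm_pos_iff]
  have := EisensteinSeries.r_pos τ
  exact lt_of_lt_of_le (by positivity) (r_mul_norm_le_norm_latticePt τ p)

lemma exists_le_norm_sub_latticePt (z : ℂ) :
    ∃ c > 0, ∀ p : ℤ × ℤ, z ≠ latticePt τ p → c * (1 + ‖p‖) ≤ ‖z - latticePt τ p‖ := by
  set r := EisensteinSeries.r τ
  have hr : 0 < r := EisensteinSeries.r_pos τ
  have hbdd : IsBoundedUnder (· ≤ ·) cofinite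
      fun p : ℤ × ℤ ↦ (1 + ‖p‖) / ‖z - latticePt τ p‖ := by
    have ht : Tendsto (fun p : ℤ × ℤ ↦ ‖p‖) cofinite atTop :=
      tendsto_norm_comp_cofinite_atTop_of_isClosedEmbedding Topology.IsClosedEmbedding.id
    refine isBoundedUnder_of_eventually_le (a := 3 / r) ?_
    filter_upwards [ht.eventually_ge_atTop ((3 * ‖z‖ + r) / (2 * r))] with p hp
    rw [div_le_iff₀ (by positivity)] at hp
    refine div_le_of_le_mul₀ (norm_nonneg _) (by positivity) ?_
    rw [div_mul_eq_mul_div, le_div_iff₀ hr]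
    have := norm_sub_norm_le (latticePt τ p) z
    rw [norm_sub_rev] at this
    linarith [r_mul_norm_le_norm_latticePt τ p]
  obtain ⟨C, hC⟩ := hbdd.bddAbove_range_of_cofinite
  refine ⟨(max C 1)⁻¹, by positivity, fun p hp ↦ ?_⟩
  have hpos : 0 < ‖z - latticePt τ p‖ := norm_pos_iff.mpr (sub_ne_zero.mpr hp)
  rw [inv_mul_le_iff₀ (by positivity), ← div_le_iff₀ hpos]
  exact (hC ⟨p, rfl⟩).trans (le_max_left _ _)

lemma exists_ball_le_norm_sub_latticePt (z : ℂ) :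
    ∃ c > 0, ∀ s ∈ Metric.ball (τ : ℂ) c, ∀ p : ℤ × ℤ, z ≠ latticePt τ p →
      c * (1 + ‖p‖) ≤ ‖z - latticePt s p‖ := by
  obtain ⟨c, hc, hle⟩ := exists_le_norm_sub_latticePt τ z
  refine ⟨c / 2, by positivity, fun s hs p hp ↦ ?_⟩
  rw [Metric.mem_ball, dist_eq_norm] at hs
  have hmove : ‖latticePt s p - latticePt τ p‖ ≤ c / 2 * (1 + ‖p‖) :=
    (norm_latticePt_sub_latticePt_le s τ p).trans (by gcongr)
  have htri := norm_sub_norm_le (z - latticePt τ p) (latticePt s p - latticePt τ p)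
  rw [sub_sub_sub_cancel_right] at htri
  linarith [hle p hp]

end Lattice

section Convergence

open UpperHalfPlane

variable {m : ℕ} {τ : ℍ} {z : ℂ}

lemma exists_summable_bound_wpSummand (hm : 1 ≤ m) (hz : ∀ p : ℤ × ℤ, z ≠ latticePt τ p) :
    ∃ c > 0, ∃ b : ℤ × ℤ → ℝ, Summable b ∧ ∀ s ∈ Metric.ball (τ : ℂ) c, ∀ p,
      z ≠ latticePt s p ∧ (p ≠ 0 → latticePt s p ≠ 0) ∧ ‖wpSummand m z (latticePt s p)‖ ≤ b p := by
  obtain ⟨c₁, hc₁, h₁⟩ := exists_ball_le_norm_sub_latticePt τ z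
  obtain ⟨c₂, hc₂, h₂⟩ := exists_ball_le_norm_sub_latticePt τ 0
  set c := min c₁ c₂
  have hc : 0 < c := lt_min hc₁ hc₂
  obtain ⟨C, hC⟩ := exists_norm_wpSummand_le hm z hc
  refine ⟨c, hc, Function.update (fun p ↦ C / (c * (1 + ‖p‖)) ^ 3) 0 ‖1 / z ^ m‖, ?_, ?_⟩
  · refine Summable.update ?_ _ _
    refine (summable_one_add_norm_pow_three_inv.mul_left (C / c ^ 3)).congr fun p ↦ ?_
    rw [mul_pow, ← div_div, div_eq_mul_inv (C / c ^ 3)]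
  intro s hs p
  have hpos : 0 < c * (1 + ‖p‖) := by positivity
  have hle_sub : c * (1 + ‖p‖) ≤ ‖z - latticePt s p‖ :=
    le_trans (by gcongr; exact min_le_left _ _)
      (h₁ s (Metric.ball_subset_ball (min_le_left _ _) hs) p (hz p))
  have hle (hp : p ≠ 0) : c * (1 + ‖p‖) ≤ ‖latticePt s p‖ := by
    have := h₂ s (Metric.ball_subset_ball (min_le_right _ _) hs) p (latticePt_ne_zero τ hp).symm
    rw [zero_sub, norm_neg] at this
    exact le_trans (by gcongr; exact min_le_right _ _) this
  refine ⟨sub_ne_zero.mp (norm_pos_iff.mp (hpos.trans_le hle_sub)),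
    fun hp ↦ norm_pos_iff.mp (hpos.trans_le (hle hp)), ?_⟩
  rcases eq_or_ne p 0 with rfl | hp
  · simp [latticePt]
  · rw [Function.update_of_ne hp]
    exact hC _ (le_mul_of_one_le_right hc.le (by linarith [norm_nonneg p])) _ hle_sub (hle hp)

lemma wp_eq_tsum_wpSummand {τ : ℂ} (h : Summable fun p ↦ wpSummand m z (latticePt τ p)) :
    wp m z τ = ∑' p, wpSummand m z (latticePt τ p) := by
  have hsplit : 1 / z ^ m + ∑' p : {p : ℤ × ℤ // p ≠ (0, 0)}, wpSummand m z (latticePt τ p) =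
      ∑' p, wpSummand m z (latticePt τ p) := by
    simpa [latticePt] using add_tsum_ne_eq_tsum h (0, 0)
  rcases m with _ | _ | _ | m
  · simp [wp, wpHigh, wpSummand]
  · simpa [wp, wp1, wpSummand] using hsplit
  · simpa [wp, wp2, wpSummand] using hsplit
  · simp [wp, wpHigh, wpSummand]

lemma hasSum_wp (hm : 1 ≤ m) (hz : ∀ p : ℤ × ℤ, z ≠ latticePt τ p) :
    HasSum (fun p ↦ wpSummand m z (latticePt τ p)) (wp m z τ) := by
  obtain ⟨c, hc, b, hb, h⟩ := exists_summable_bound_wpSummand hm hz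
  have hs : Summable fun p ↦ wpSummand m z (latticePt τ p) :=
    .of_norm_bounded hb fun p ↦ (h τ (Metric.mem_ball_self hc) p).2.2
  exact wp_eq_tsum_wpSummand hs ▸ hs.hasSum

lemma hasDerivAt_wpSummand_latticePt {s : ℂ} {p : ℤ × ℤ} (h : z ≠ latticePt s p)
    (h0 : p ≠ 0 → latticePt s p ≠ 0) :
    HasDerivAt (fun s ↦ wpSummand m z (latticePt s p))
      (p.1 / latticePt s p *
        (m * (z * wpSummand (m + 1) z (latticePt s p) - wpSummand m z (latticePt s p)))) s := by
  rcases eq_or_ne p 0 with rfl | hp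
  · simpa [latticePt] using hasDerivAt_const s _
  · refine ((hasDerivAt_wpSummand m h (h0 hp)).comp s (hasDerivAt_latticePt s p)).congr_deriv ?_
    ring

lemma hasSum_deriv_wp (hm : 1 ≤ m) (hz : ∀ p : ℤ × ℤ, z ≠ latticePt τ p) :
    HasSum (fun p : ℤ × ℤ ↦ p.1 / latticePt τ p *
        (m * (z * wpSummand (m + 1) z (latticePt τ p) - wpSummand m z (latticePt τ p))))
      (deriv (fun s ↦ wp m z s) τ) := by
  obtain ⟨c, hc, b, hb, h⟩ := exists_summable_bound_wpSummand hm hz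
  have hτ := Metric.mem_ball_self (x := (τ : ℂ)) hc
  have hderiv p s hs := hasDerivAt_wpSummand_latticePt (m := m) (h s hs p).1 (h s hs p).2.1
  have htsum : (fun s ↦ wp m z s) =ᶠ[𝓝 ↑τ] fun s ↦ ∑' p, wpSummand m z (latticePt s p) := by
    filter_upwards [Metric.isOpen_ball.mem_nhds hτ] with s hs
    exact wp_eq_tsum_wpSummand (.of_norm_bounded hb fun p ↦ (h s hs p).2.2)
  rw [htsum.deriv_eq]
  exact (Complex.hasSum_deriv_of_summable_norm hb
    (fun p s hs ↦ (hderiv p s hs).differentiableAt.differentiableWithinAt) Metric.isOpen_ball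
    (fun p s hs ↦ (h s hs p).2.2) hτ).congr_fun fun p ↦ (hderiv p τ hτ).deriv.symm

end Convergence

section EisensteinSeriesG2

open UpperHalfPlane EisensteinSeries

/-- Subtracting the telescoping series `∑ (1 / (mτ + n) - 1 / (mτ + n + 1)) = 0` makes the double
series for `G₂` absolutely convergent. -/
lemma e2Summand_eq_tsum_telescoped (τ : ℍ) {m : ℤ} (hm : m ≠ 0) :
    e2Summand m τ = ∑' n : ℤ, (((m : ℂ) * τ + n) ^ 2 * (m * τ + n + 1))⁻¹ := by
  have htel := summable_right_one_div_linear_sub_one_div_linear_succ τ m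
  have htel_zero := tsum_symmetricIco_linear_sub_linear_add_one_eq_zero τ m
  rw [tsum_eq_of_summable_unconditional htel] at htel_zero
  rw [e2Summand, ← sub_zero (∑' n, _), ← htel_zero, ← (e2Summand_summable m τ).tsum_sub htel]
  refine tsum_congr fun n ↦ ?_
  have h0 : (m : ℂ) * τ + n ≠ 0 := by
    simpa using linear_ne_zero τ (cd := ![(m : ℝ), n]) (by simp [hm])
  have h1 : (m : ℂ) * τ + n + 1 ≠ 0 := by
    simpa [add_assoc] using linear_ne_zero τ (cd := ![(m : ℝ), n + 1]) (by simp [hm])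
  simp only [eisSummand, Matrix.cons_val_zero, Matrix.cons_val_one, zpow_neg, zpow_ofNat]
  field_simp
  ring

lemma summable_e2Summand (τ : ℍ) : Summable (e2Summand · τ) := by
  have h : Summable fun v : Fin 2 → ℤ ↦ (((v 0 : ℂ) * τ + v 1) ^ 2 * (v 0 * τ + v 1 + 1))⁻¹ := by
    apply summable_of_isBigO_rpow_norm (a := 3) (by norm_num)
    simpa [pow_three, pow_two, ← mul_assoc] using
      ((isBigO_linear_add_const_vec τ 0 1).mul (isBigO_linear_add_const_vec τ 0 0)).mul
        (isBigO_linear_add_const_vec τ 0 0)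
  refine ((finTwoArrowEquiv ℤ).symm.summable_iff.mpr h).prod.congr_cofinite ?_
  filter_upwards [eventually_cofinite_ne 0] with m hm
  simp [e2Summand_eq_tsum_telescoped τ hm]

lemma G2_coe_eq_eisensteinSeries_G2 (τ : ℍ) : _root_.G2 τ = EisensteinSeries.G2 τ := by
  have hs := summable_e2Summand τ
  rw [EisensteinSeries.G2, tsum_eq_of_summable_unconditional hs, ← add_tsum_ne_eq_tsum hs 0,
    e2Summand_zero_eq_two_riemannZeta_two, riemannZeta_two, _root_.G2]
  congr 1
  · ring
  · exact tsum_congr fun m ↦ tsum_congr fun n ↦ by simp [eisSummand, zpow_ofNat]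

end EisensteinSeriesG2

section Modular

open UpperHalfPlane MatrixGroups

variable (g : SL(2, ℤ)) (τ : ℍ)

lemma G2_modular :
    G2 ↑(g • τ) = denom g τ ^ 2 * G2 τ - 2 * Real.pi * Complex.I * g 1 0 * denom g τ := by
  have hj := denom_ne_zero g τ
  have h := congrFun (EisensteinSeries.G2_slash_action g) τ
  rw [ModularForm.SL_slash_apply, Pi.sub_apply, EisensteinSeries.D2,
    ← G2_coe_eq_eisensteinSeries_G2, ← G2_coe_eq_eisensteinSeries_G2, zpow_neg, zpow_ofNat,
    ← div_eq_mul_inv, div_eq_iff (pow_ne_zero 2 hj)] at h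
  rw [h]
  field_simp

/-- The coordinates of the lattice isomorphism `Λ_τ ≃ Λ_{gτ}`, `x ↦ x / (Cτ + D)`. -/
def latticeEquiv : ℤ × ℤ ≃ ℤ × ℤ where
  toFun p := (g 1 1 * p.1 - g 1 0 * p.2, -g 0 1 * p.1 + g 0 0 * p.2)
  invFun p := (g 0 0 * p.1 + g 1 0 * p.2, g 0 1 * p.1 + g 1 1 * p.2)
  left_inv p := by
    have h := g.det_coe
    rw [Matrix.det_fin_two] at h
    ext
    · linear_combination p.1 * h
    · linear_combination p.2 * h
  right_inv p := by
    have h := g.det_coe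
    rw [Matrix.det_fin_two] at h
    ext
    · linear_combination p.1 * h
    · linear_combination p.2 * h

lemma latticePt_latticeEquiv (p : ℤ × ℤ) :
    latticePt ↑(g • τ) (latticeEquiv g p) = latticePt τ p / denom g τ := by
  have hj := denom_ne_zero g τ
  have hdet : (g 0 0 * g 1 1 - g 0 1 * g 1 0 : ℂ) = 1 := by
    exact_mod_cast (Matrix.det_fin_two _).symm.trans g.det_coe
  rw [ModularGroup.denom_apply] at *
  simp only [latticePt, latticeEquiv, Equiv.coe_fn_mk, coe_specialLinearGroup_apply,
    algebraMap_int_eq, eq_intCast, Complex.ofReal_intCast]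
  push_cast
  field_simp
  linear_combination (p.1 * τ + p.2) * hdet

lemma coe_fst_latticeEquiv (p : ℤ × ℤ) :
    ((latticeEquiv g p).1 : ℂ) = denom g τ * p.1 - g 1 0 * latticePt τ p := by
  simp only [latticePt, latticeEquiv, Equiv.coe_fn_mk, ModularGroup.denom_apply]
  push_cast
  ring

variable {τ} {m : ℕ} {z : ℂ}

lemma div_denom_ne_latticePt (hz : ∀ p : ℤ × ℤ, z ≠ latticePt τ p) (p : ℤ × ℤ) :
    z / denom g τ ≠ latticePt ↑(g • τ) p := by
  obtain ⟨q, rfl⟩ := (latticeEquiv g).surjective p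
  rw [latticePt_latticeEquiv, Ne, div_left_inj' (denom_ne_zero g τ)]
  exact hz q

lemma wp_modular (hm : 1 ≤ m) (hz : ∀ p : ℤ × ℤ, z ≠ latticePt τ p) :
    wp m (z / denom g τ) ↑(g • τ) = denom g τ ^ m * wp m z τ := by
  have h := (latticeEquiv g).hasSum_iff.mpr (hasSum_wp hm (div_denom_ne_latticePt g hz))
  refine h.unique (((hasSum_wp hm hz).mul_left _).congr_fun fun p ↦ ?_)
  rw [Function.comp_apply, latticePt_latticeEquiv, wpSummand_div_div _ _ _ (denom_ne_zero g τ)]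

/-- The anomaly arises because the first lattice coordinate `k` is sent to
`(Cτ + D) * k - C * l`, where `l` is the lattice point. -/
lemma deriv_wp_modular (hm : 1 ≤ m) (hz : ∀ p : ℤ × ℤ, z ≠ latticePt τ p) :
    deriv (fun s ↦ wp m (z / denom g τ) s) ↑(g • τ) =
      denom g τ ^ (m + 2) * deriv (fun s ↦ wp m z s) τ -
        m * g 1 0 * denom g τ ^ (m + 1) * (z * wp (m + 1) z τ - wp m z τ) := by
  have hj := denom_ne_zero g τ
  have h := (latticeEquiv g).hasSum_iff.mpr (hasSum_deriv_wp hm (div_denom_ne_latticePt g hz))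
  refine h.unique ((((hasSum_deriv_wp hm hz).mul_left _).sub
    ((((hasSum_wp (by lia) hz).mul_left z).sub (hasSum_wp hm hz)).mul_left _)).congr_fun fun p ↦ ?_)
  have hz0 : z ≠ 0 := by simpa [latticePt] using hz 0
  rw [Function.comp_apply, latticePt_latticeEquiv, wpSummand_div_div _ _ _ hj,
    wpSummand_div_div _ _ _ hj, coe_fst_latticeEquiv g τ]
  rcases eq_or_ne p 0 with rfl | hp
  · simp [latticePt, pow_succ, hz0]
  · have hl := latticePt_ne_zero τ hp
    field_simp
    ring

theorem phiTheta_modular_general {u v w : ℂ} (hm : 1 ≤ m)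
    (huv : ∀ p : ℤ × ℤ, u - v ≠ latticePt τ p) (huw : ∀ p : ℤ × ℤ, u - w ≠ latticePt τ p)
    (hvw : ∀ p : ℤ × ℤ, v - w ≠ latticePt τ p) :
    phiTheta m (u / denom g τ) (v / denom g τ) (w / denom g τ) ↑(g • τ) =
      denom g τ ^ (m + 2) * phiTheta m u v w τ := by
  have hj := denom_ne_zero g τ
  have hwp1 : ∀ {z : ℂ}, (∀ p : ℤ × ℤ, z ≠ latticePt τ p) →
      wp1 (z / denom g τ) ↑(g • τ) = denom g τ * wp1 z τ := by
    intro z hz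
    simpa [wp] using wp_modular g le_rfl hz
  rw [phiTheta, phiTheta, ← sub_div, ← sub_div, ← sub_div, G2_modular, deriv_wp_modular g hm huv,
    wp_modular g hm huv, wp_modular g (by lia) huv, hwp1 huw, hwp1 hvw]
  field_simp
  ring

end Modular

/-- Modular transformation of weight `m+2` of `φ = ϑ_j(℘_m(z_r−z_s;·))` (case `j ∉ {r,s}`):
for `g = (A B; C D) ∈ SL₂(ℤ)`,
`φ(u/(Cτ+D), v/(Cτ+D), w/(Cτ+D); (Aτ+B)/(Cτ+D)) = (Cτ+D)^{m+2}·φ(u,v,w;τ)`. -/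
theorem phiTheta_modular (m : ℕ) (hm : 2 ≤ m)
    (g : Matrix.SpecialLinearGroup (Fin 2) ℤ) (τ u v w : ℂ) (hτ : 0 < τ.im)
    (huv : ∀ p : ℤ × ℤ, u - v ≠ latticePt τ p)
    (huw : ∀ p : ℤ × ℤ, u - w ≠ latticePt τ p)
    (hvw : ∀ p : ℤ × ℤ, v - w ≠ latticePt τ p) :
    phiTheta m (u / ((g 1 0 : ℤ) * τ + (g 1 1 : ℤ)))
        (v / ((g 1 0 : ℤ) * τ + (g 1 1 : ℤ)))
        (w / ((g 1 0 : ℤ) * τ + (g 1 1 : ℤ)))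
        (((g 0 0 : ℤ) * τ + (g 0 1 : ℤ)) / ((g 1 0 : ℤ) * τ + (g 1 1 : ℤ))) =
      ((g 1 0 : ℤ) * τ + (g 1 1 : ℤ)) ^ (m + 2) * phiTheta m u v w τ := by
  have h := phiTheta_modular_general g (τ := ⟨τ, hτ⟩) (by lia : 1 ≤ m) huv huw hvw
  rw [UpperHalfPlane.coe_specialLinearGroup_apply, ModularGroup.denom_apply] at h
  simpa using h
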